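/- Let σ0 > 0 and a ∈ ℝ. For p ≥ 2, let ω_p denote the p-optimal level of the half-infinite interval [a, +∞) with respect to φ0 = γ_{0,σ0}. Then ω_p grows at least like √p: there exist c > 0 and p₀ such that ω_p ≥ c·√p for all p ≥ p₀ (in particular ω_p → +∞ as p → ∞). -/

import Mathlib

/-!
Fix `M = c √p` with `c = σ0 / 12` and suppose `ω p < M`. Then `2 M` is a strictly better level than
`ω p`, contradicting minimality. Moving the level from `ω p` to `2 M` increases the cost `|t - ·| ^ p`
only at points `t` below `2 M`, where the new cost is at most `(3 M) ^ p`; on the far interval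
`[11 M, 12 M]` it decreases the cost by at least `(9 M) ^ p / 9`. The constant `c` is chosen so that
the Gaussian density on that interval is still at least a constant times `exp (-p / 2)`, and
`3 ^ p * exp (-p / 2) ≥ exp (p / 2)` is unbounded, so for large `p` the gain exceeds the loss.
The pointwise comparison is `cost_gain`, and its integrated form is `gain_le_loss`.
-/

open MeasureTheory Filter

/-- Centered Gaussian pdf of standard deviation σ. -/
noncomputable def gaussPdf (σ t : ℝ) : ℝ :=
  (2 * Real.pi * σ ^ 2) ^ (-(1:ℝ) / 2) * Real.exp (-(t ^ 2) / (2 * σ ^ 2))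

lemma gaussPdf_nonneg (σ t : ℝ) : 0 ≤ gaussPdf σ t := by
  unfold gaussPdf; positivity

lemma gaussPdf_eq {σ : ℝ} (hσ : 0 < σ) (t : ℝ) :
    gaussPdf σ t = ProbabilityTheory.gaussianPDFReal 0 (⟨σ, hσ.le⟩ ^ 2) t := by
  have h : (0:ℝ) ≤ 2 * Real.pi * σ ^ 2 := by positivity
  unfold gaussPdf ProbabilityTheory.gaussianPDFReal
  rw [neg_div, Real.rpow_neg h, ← Real.sqrt_eq_rpow, sub_zero,
    show ((⟨σ, hσ.le⟩ ^ 2 : NNReal) : ℝ) = σ ^ 2 from NNReal.coe_pow _ _]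

lemma integrable_gaussPdf {σ : ℝ} (hσ : 0 < σ) : Integrable (gaussPdf σ) := by
  rw [show gaussPdf σ = _ from funext (gaussPdf_eq hσ)]
  exact ProbabilityTheory.integrable_gaussianPDFReal _ _

/-- All absolute moments of the Gaussian are finite: this is the membership of the identity in
`L^p` of `gaussianReal`, transported to its density. -/
lemma integrable_abs_sub_rpow_mul_gaussPdf {σ : ℝ} (hσ : 0 < σ) {p : ℝ} (hp : 2 ≤ p) (l : ℝ) :
    Integrable (fun t => |t - l| ^ p * gaussPdf σ t) := by
  have hv : (⟨σ, hσ.le⟩ ^ 2 : NNReal) ≠ 0 := by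
    apply pow_ne_zero
    intro h
    exact hσ.ne' (congrArg NNReal.toReal h)
  have h1 : MemLp (fun t : ℝ => t - l) (p.toNNReal : ENNReal)
      (ProbabilityTheory.gaussianReal 0 (⟨σ, hσ.le⟩ ^ 2)) :=
    (ProbabilityTheory.memLp_id_gaussianReal p.toNNReal).sub (memLp_const l)
  have h2 := h1.integrable_norm_rpow'
  rw [ProbabilityTheory.gaussianReal_of_var_ne_zero _ hv,
    integrable_withDensity_iff (ProbabilityTheory.measurable_gaussianPDF _ _)
      (ae_of_all _ fun _ => ProbabilityTheory.gaussianPDF_lt_top)] at h2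
  refine h2.congr (ae_of_all _ fun t => ?_)
  simp only [ENNReal.coe_toReal, Real.coe_toNNReal p (by linarith), Real.norm_eq_abs,
    ProbabilityTheory.toReal_gaussianPDF, gaussPdf_eq hσ]

/-- Effect on the cost of replacing a level `w < M` by `2 M`, at a point `t ≥ a`: a gain of at least
`(9 M) ^ p / 9` on `[11 M, 12 M]`, and a loss of at most `(3 M) ^ p` elsewhere. For a uniform bound
the allowance `(3 M) ^ p` is added at every `t`, also where there is no loss. -/
lemma cost_gain {a p M w t : ℝ} (hp : 2 ≤ p) (hM : 1 ≤ M) (ha : |a| ≤ M) (hw : w < M)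
    (ht : a ≤ t) :
    |t - 2 * M| ^ p + (Set.Icc (11 * M) (12 * M)).indicator (fun _ => (9 * M) ^ p / 9) t
      ≤ |t - w| ^ p + (3 * M) ^ p := by
  have h3 : 0 ≤ (3 * M) ^ p := by positivity
  by_cases hJ : t ∈ Set.Icc (11 * M) (12 * M)
  · rw [Set.indicator_of_mem hJ]
    obtain ⟨hl, -⟩ := hJ
    have key : ∀ x : ℝ, 0 < x → x ^ p = x * x ^ (p - 1) := fun x hx => by
      rw [Real.rpow_sub_one hx.ne']; field_simp
    have hx : 9 * M ≤ t - 2 * M := by linarith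
    rw [abs_of_pos (by linarith : 0 < t - 2 * M), abs_of_pos (by linarith : 0 < t - w)]
    rw [key (t - 2 * M) (by linarith), key (t - w) (by linarith), key (9 * M) (by linarith)]
    have e1 : (9 * M) ^ (p - 1) ≤ (t - 2 * M) ^ (p - 1) :=
      Real.rpow_le_rpow (by linarith) hx (by linarith)
    have e2 : (t - 2 * M) ^ (p - 1) ≤ (t - w) ^ (p - 1) :=
      Real.rpow_le_rpow (by linarith) (by linarith) (by linarith)
    have e0 : 0 ≤ (t - 2 * M) ^ (p - 1) := Real.rpow_nonneg (by linarith) _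
    have e3 : (t - w) * (t - 2 * M) ^ (p - 1) ≤ (t - w) * (t - w) ^ (p - 1) :=
      mul_le_mul_of_nonneg_left e2 (by linarith)
    have e4 : (t - 2 * M + M) * (t - 2 * M) ^ (p - 1) ≤ (t - w) * (t - 2 * M) ^ (p - 1) :=
      mul_le_mul_of_nonneg_right (by linarith) e0
    have e5 : M * (9 * M) ^ (p - 1) ≤ M * (t - 2 * M) ^ (p - 1) :=
      mul_le_mul_of_nonneg_left e1 (by linarith)
    linarith
  · rw [Set.indicator_of_notMem hJ, add_zero]
    rcases le_total t (2 * M) with h | h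
    · have : |t - 2 * M| ^ p ≤ (3 * M) ^ p := by
        apply Real.rpow_le_rpow (abs_nonneg _) _ (by linarith)
        rw [abs_le]; constructor <;> linarith [neg_abs_le a]
      have : 0 ≤ |t - w| ^ p := by positivity
      linarith
    · have : |t - 2 * M| ^ p ≤ |t - w| ^ p := by
        apply Real.rpow_le_rpow (abs_nonneg _) _ (by linarith)
        rw [abs_of_nonneg (by linarith), abs_of_nonneg (by linarith)]
        linarith
      linarith

/-- If a level `w < M` is at least as good as `2 M`, then the gain on `[11 M, 12 M]` is dominated by
the maximal possible loss. -/
lemma gain_le_loss {σ a p M w : ℝ} (hσ : 0 < σ) (hp : 2 ≤ p) (hM : 1 ≤ M) (ha : |a| ≤ M)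
    (hw : w < M)
    (hopt : ∫ t in Set.Ici a, |t - w| ^ p * gaussPdf σ t ≤
      ∫ t in Set.Ici a, |t - 2 * M| ^ p * gaussPdf σ t) :
    (9 * M) ^ p / 9 * ∫ t in Set.Icc (11 * M) (12 * M), gaussPdf σ t ≤
      (3 * M) ^ p * ∫ t in Set.Ici a, gaussPdf σ t := by
  have hg := integrable_gaussPdf hσ
  have hsub : Set.Icc (11 * M) (12 * M) ⊆ Set.Ici a := fun t ht => by
    have := ht.1
    simp only [Set.mem_Ici]
    linarith [le_abs_self a]
  have hI := fun l => (integrable_abs_sub_rpow_mul_gaussPdf hσ hp l).integrableOn (s := Set.Ici a)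
  have hind : Integrable ((Set.Icc (11 * M) (12 * M)).indicator
      fun t => (9 * M) ^ p / 9 * gaussPdf σ t) :=
    (hg.const_mul _).indicator measurableSet_Icc
  have hmono := setIntegral_mono_on ((hI (2 * M)).add hind.integrableOn)
    ((hI w).add (hg.const_mul ((3 * M) ^ p)).integrableOn) measurableSet_Ici (fun t ht => by
      have h := mul_le_mul_of_nonneg_right (cost_gain hp hM ha hw ht) (gaussPdf_nonneg σ t)
      simp only [Pi.add_apply]
      by_cases hJ : t ∈ Set.Icc (11 * M) (12 * M)
      · rw [Set.indicator_of_mem hJ] at h ⊢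
        linarith
      · rw [Set.indicator_of_notMem hJ] at h ⊢
        linarith)
  simp only [Pi.add_apply] at hmono
  rw [integral_add (hI _) hind.integrableOn,
    integral_add (hI _) (hg.const_mul ((3 * M) ^ p)).integrableOn,
    setIntegral_indicator measurableSet_Icc, Set.inter_eq_right.mpr hsub,
    integral_const_mul, integral_const_mul] at hmono
  linarith

theorem p_optimal_level_halfline_growth
    (σ0 : ℝ) (hσ0 : 0 < σ0) (a : ℝ)
    (ω : ℝ → ℝ)
    (hω : ∀ p : ℝ, 2 ≤ p → ∀ lam : ℝ,
      ∫ t in Set.Ici a, |t - ω p| ^ p * gaussPdf σ0 t ≤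
        ∫ t in Set.Ici a, |t - lam| ^ p * gaussPdf σ0 t) :
    ∃ c : ℝ, 0 < c ∧ ∃ p₀ : ℝ, ∀ p : ℝ, p₀ ≤ p → c * Real.sqrt p ≤ ω p := by
  set K : ℝ := (2 * Real.pi * σ0 ^ 2) ^ (-(1:ℝ) / 2) with hK
  have hKpos : 0 < K := by positivity
  set A : ℝ := ∫ t in Set.Ici a, gaussPdf σ0 t
  have hlim : Tendsto (fun p : ℝ => σ0 / 12 * Real.sqrt p) atTop atTop :=
    Real.tendsto_sqrt_atTop.const_mul_atTop (by positivity)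
  obtain ⟨p₀, hp₀⟩ := eventually_atTop.1 ((eventually_ge_atTop (2:ℝ)).and
    ((eventually_ge_atTop (18 * A / K)).and ((hlim.eventually_ge_atTop 1).and
      (hlim.eventually_ge_atTop |a|))))
  refine ⟨σ0 / 12, by positivity, p₀, fun p hp => ?_⟩
  obtain ⟨hp2, hpA, hM, ha⟩ := hp₀ p hp
  by_contra! hw
  set M : ℝ := σ0 / 12 * Real.sqrt p with hMdef
  have hgl := gain_le_loss hσ0 hp2 hM ha hw (hω p hp2 (2 * M))
  have hsq : (12 * M) ^ 2 = σ0 ^ 2 * p := by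
    rw [hMdef, show 12 * (σ0 / 12 * √p) = σ0 * √p by ring, mul_pow, Real.sq_sqrt (by linarith)]
  have hdens : ∀ t ∈ Set.Icc (11 * M) (12 * M), K * Real.exp (-(p / 2)) ≤ gaussPdf σ0 t := by
    intro t ht
    unfold gaussPdf
    refine mul_le_mul_of_nonneg_left (Real.exp_le_exp.2 ?_) hKpos.le
    have : t ^ 2 ≤ σ0 ^ 2 * p := by
      rw [← hsq]
      exact pow_le_pow_left₀ (by linarith [ht.1]) ht.2 2
    rw [neg_div, neg_le_neg_iff, div_le_iff₀ (by positivity)]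
    linarith
  have hmass : K * Real.exp (-(p / 2)) ≤ ∫ t in Set.Icc (11 * M) (12 * M), gaussPdf σ0 t := by
    have h := setIntegral_mono_on (μ := volume)
      (integrableOn_const (by simp))
      (integrable_gaussPdf hσ0).integrableOn measurableSet_Icc hdens
    rw [setIntegral_const, Real.volume_real_Icc_of_le (by linarith), smul_eq_mul] at h
    have : 0 < K * Real.exp (-(p / 2)) := by positivity
    nlinarith
  have h3M : 0 < (3 * M) ^ p := by positivity
  have hsplit : (9 * M) ^ p = 3 ^ p * (3 * M) ^ p := by
    rw [← Real.mul_rpow (by norm_num) (by linarith)]; ring_nf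
  have h3 : Real.exp p ≤ 3 ^ p := by
    rw [← Real.exp_one_rpow]
    exact Real.rpow_le_rpow (by positivity) Real.exp_one_lt_three.le (by linarith)
  have h4 : 3 ^ p * (K * Real.exp (-(p / 2))) ≤ 9 * A := by
    have h5 := mul_le_mul_of_nonneg_left hmass (by positivity : 0 ≤ (9 * M) ^ p / 9)
    rw [hsplit] at h5 hgl
    refine le_of_mul_le_mul_left ?_ h3M
    linarith
  have h6 : K * Real.exp (p / 2) ≤ 9 * A := by
    refine le_trans (le_trans (le_of_eq ?_) (mul_le_mul_of_nonneg_right h3 (by positivity))) h4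
    rw [mul_left_comm, ← Real.exp_add]
    ring_nf
  rw [div_le_iff₀ hKpos] at hpA
  have h7 := mul_le_mul_of_nonneg_left (Real.add_one_le_exp (p / 2)) hKpos.le
  linarith
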